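/- Corollary: Fix k ≥ 6. For every c > 0 there exists N such that any finite group G with |G| > N and any S ⊆ G × G with |S| ≥ c|G|² admits k elements of G spanning at least k − 3 triples (a, b, ab) from S. (The Brown–Erdős–Sós conjecture holds for finite groups when k is sufficiently large.) -/

import Mathlib

/-!
Let `S ⊆ G × G` be dense. A large finite group has a large abelian subgroup: either its order has a
large prime factor or a Sylow subgroup is large, and a maximal normal abelian subgroup `A` of a
nilpotent group is its own centralizer, so the order of the group is at most `|A| * |Aut A|`.

In an abelian subgroup `H`, fix `d₁, …, dₙ` whose `2 ^ n` subset products are distinct. A word over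
`{0, …, m} × {0, …, m}` of length `n` determines a pair `(∏ dᵢ ^ aᵢ, ∏ dᵢ ^ bᵢ) ∈ H × H`, and
averaging over the translates of this pair, on the left in the first coordinate and on the right in
the second, turns `S` into a dense set of words. The multidimensional density Hales–Jewett theorem
puts a combinatorial subspace into this set: there are `x, y ∈ G` and `D₁, …, Dᵣ ∈ H` with the pairs
`(x ∏ Dⱼ ^ aⱼ, (∏ Dⱼ ^ bⱼ) y)` all in `S`.

Now take the two columns `y` and `z = D₁ y`. The identity `(x w) z = (x D₁ w) y` lets both columns
share products, and with `w` running over a set on which multiplication by `D₁` mostly stays inside,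
each row beyond the first costs two elements and yields two triples.

Density Hales–Jewett follows the argument of Dodos, Kanellopoulos and Tyros, by induction on the
alphabet. A line-free set of nearly maximal density has, after restriction to a subspace, excess
density on the complement of an intersection of insensitive sets. Density Hales–Jewett for the
smaller alphabet partitions such a complement into subspaces up to a small error, so some subspace
carries a line-free set of more than the maximal density.
-/

namespace BrownErdosSos

open Combinatorics Finset
open scoped BigOperators

section Density

variable {X Y Z : Type*}

lemma indicator_one_mem_Icc (A : Set X) (x : X) : A.indicator (1 : X → ℝ) x ∈ Set.Icc 0 1 :=
  ⟨Set.indicator_nonneg (fun _ _ => zero_le_one) x,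
    Set.indicator_le_self' (fun _ _ => zero_le_one) x⟩

variable [Fintype X] [Fintype Y] [Fintype Z]

/-- The uniform probability of a subset `A` of a finite type. -/
noncomputable def density (A : Set X) : ℝ := 𝔼 x, A.indicator 1 x

lemma density_nonneg (A : Set X) : 0 ≤ density A :=
  expect_nonneg fun x _ => (indicator_one_mem_Icc A x).1

lemma density_empty : density (∅ : Set X) = 0 := by simp [density]

lemma density_compl [Nonempty X] (A : Set X) : density Aᶜ = 1 - density A := by
  simp only [density, Set.indicator_compl, Pi.sub_apply, Pi.one_apply, expect_sub_distrib,
    Fintype.expect_one]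

lemma density_le_one [Nonempty X] (A : Set X) : density A ≤ 1 := by
  linarith [density_compl A, density_nonneg Aᶜ]

lemma nonempty_of_density_pos {A : Set X} (h : 0 < density A) : A.Nonempty := by
  rw [Set.nonempty_iff_ne_empty]
  rintro rfl
  exact h.ne' density_empty

lemma density_preimage_equiv (e : X ≃ Y) (A : Set Y) : density (e ⁻¹' A) = density A :=
  Fintype.expect_equiv e _ _ fun _ => rfl

lemma expect_density_comm (A : X → Set Y) :
    𝔼 x, density (A x) = 𝔼 y, density {x | y ∈ A x} :=
  expect_comm _ _ _

lemma expect_indicator_range [Nonempty Z] {φ : Z → X} (hφ : φ.Injective) (g : X → ℝ) :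
    𝔼 x, (Set.range φ).indicator g x = (𝔼 z, g (φ z)) * (Fintype.card Z / Fintype.card X) := by
  classical
  have hsum : ∑ x, (Set.range φ).indicator g x = ∑ z, g (φ z) := by
    rw [← sum_image (f := g) hφ.injOn, ← sum_indicator_subset g (subset_univ _)]
    simp
  have hZ : (Fintype.card Z : ℝ) ≠ 0 := Nat.cast_ne_zero.2 Fintype.card_ne_zero
  rw [Fintype.expect_eq_sum_div_card, Fintype.expect_eq_sum_div_card, hsum]
  field_simp

lemma density_range [Nonempty Z] {φ : Z → X} (hφ : φ.Injective) :
    density (Set.range φ) = Fintype.card Z / Fintype.card X := by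
  rw [density, expect_indicator_range hφ 1]
  simp

lemma le_density_of_le_expect [Nonempty X] {f : X → ℝ} (hf : ∀ x, f x ≤ 1) {δ : ℝ} (hδ : 0 ≤ δ)
    (h : δ ≤ 𝔼 x, f x) : δ / 2 ≤ density {x | δ / 2 ≤ f x} := by
  set L := {x | δ / 2 ≤ f x}
  have hle : 𝔼 x, f x ≤ 𝔼 x, (δ / 2 + L.indicator 1 x) := by
    refine expect_le_expect fun x _ => ?_
    by_cases hx : x ∈ L
    · rw [Set.indicator_of_mem hx, Pi.one_apply]
      linarith [hf x]
    · rw [Set.indicator_of_notMem hx]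
      linarith [not_le.1 fun h : δ / 2 ≤ f x => hx h]
  rw [expect_add_distrib, Fintype.expect_const] at hle
  unfold density
  linarith

lemma exists_density_le_card_mul_of_subset_iUnion {P : Set Y} {Q : Z → Set Y}
    (hP : 0 < density P) (h : P ⊆ ⋃ z, Q z) :
    ∃ z, density P ≤ Fintype.card Z * density (Q z) := by
  have hsum : density P ≤ ∑ z, density (Q z) := by
    unfold density
    rw [← expect_sum_comm]
    refine expect_le_expect fun y _ => ?_
    have hnonneg : ∀ z, 0 ≤ (Q z).indicator (1 : Y → ℝ) y := fun z =>
      (indicator_one_mem_Icc (Q z) y).1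
    by_cases hy : y ∈ P
    · obtain ⟨z, hz⟩ := Set.mem_iUnion.1 (h hy)
      rw [Set.indicator_of_mem hy, ← Set.indicator_of_mem hz (1 : Y → ℝ)]
      exact single_le_sum (f := fun z => (Q z).indicator (1 : Y → ℝ) y) (fun z _ => hnonneg z)
        (mem_univ z)
    · rw [Set.indicator_of_notMem hy]
      exact sum_nonneg fun z _ => hnonneg z
  by_contra! hlt
  have hne : (univ : Finset Z).Nonempty := by
    rw [nonempty_iff_ne_empty]
    intro hempty
    rw [hempty, sum_empty] at hsum
    exact hsum.not_gt hP
  have hcard : (0 : ℝ) < Fintype.card Z := Nat.cast_pos.2 hne.card_pos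
  have hlt_sum : ∑ z, Fintype.card Z * density (Q z) < ∑ _z : Z, density P :=
    sum_lt_sum_of_nonempty hne fun z _ => hlt z
  rw [← mul_sum, sum_const, card_univ, nsmul_eq_mul, mul_lt_mul_iff_right₀ hcard] at hlt_sum
  exact hlt_sum.not_ge hsum

end Density

section Subspace

variable {α β η ι κ : Type*}

lemma subspace_injective (v : Subspace η α ι) : Function.Injective v := by
  intro x y hxy
  funext e
  obtain ⟨i, hi⟩ := v.proper e
  simpa only [Subspace.apply_inr hi] using congrFun hxy i

lemma line_idxFun_injective : Function.Injective (Line.idxFun : Line α ι → ι → Option α) :=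
  fun _ _ => Line.ext

instance [Finite α] [Finite ι] : Finite (Line α ι) := .of_injective _ line_idxFun_injective

/-- The subspace parametrized by `fun x ↦ v (u x)`. -/
def subspaceComp (v : Subspace κ α ι) (u : Subspace η α κ) : Subspace η α ι where
  idxFun i := (v.idxFun i).elim .inl u.idxFun
  proper e := by
    obtain ⟨j, hj⟩ := u.proper e
    obtain ⟨i, hi⟩ := v.proper j
    exact ⟨i, by rw [hi, Sum.elim_inr, hj]⟩

@[simp]
lemma subspaceComp_apply (v : Subspace κ α ι) (u : Subspace η α κ) (x : η → α) :
    subspaceComp v u x = v (u x) := by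
  funext i
  cases hi : v.idxFun i <;> simp [Subspace.coe_apply, subspaceComp, hi]

/-- The line parametrized by `fun a ↦ v (l a)`. -/
def lineComp (v : Subspace κ α ι) (l : Line α κ) : Line α ι where
  idxFun i := (v.idxFun i).elim some l.idxFun
  proper := by
    obtain ⟨j, hj⟩ := l.proper
    obtain ⟨i, hi⟩ := v.proper j
    exact ⟨i, by rw [hi, Sum.elim_inr, hj]⟩

@[simp]
lemma lineComp_apply (v : Subspace κ α ι) (l : Line α κ) (a : α) : lineComp v l a = v (l a) := by
  funext i
  cases hi : v.idxFun i <;> simp [Subspace.coe_apply, lineComp, hi]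

/-- The subspace over the alphabet `β` obtained by applying `f : α → β` to the constant
coordinates of `v`. -/
def subspaceMap (f : α → β) (v : Subspace η α ι) : Subspace η β ι where
  idxFun i := (v.idxFun i).map f id
  proper e := (v.proper e).imp fun i hi => by rw [hi, Sum.map_inr, id]

lemma subspaceMap_apply_comp (f : α → β) (v : Subspace η α ι) (x : η → α) :
    subspaceMap f v (f ∘ x) = f ∘ v x := by
  funext i
  cases hi : v.idxFun i <;> simp [Subspace.coe_apply, subspaceMap, hi]

lemma subspaceMap_subspaceComp (f : α → β) (v : Subspace κ α ι) (u : Subspace η α κ) (x : η → β) :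
    subspaceMap f (subspaceComp v u) x = subspaceMap f v (subspaceMap f u x) := by
  funext i
  cases hi : v.idxFun i <;> simp [Subspace.coe_apply, subspaceMap, subspaceComp, hi]

lemma subspaceMap_some_idxFun (v : Subspace κ α ι) (l : Line α κ) :
    subspaceMap some v l.idxFun = (lineComp v l).idxFun := by
  funext i
  cases hi : v.idxFun i <;> simp [Subspace.coe_apply, subspaceMap, lineComp, hi]

/-- The subspace of words of length `m + n` with prefix `x`. -/
def prefixSubspace {m n : ℕ} (x : Fin m → α) : Subspace (Fin n) α (Fin (m + n)) where
  idxFun := Fin.append (Sum.inl ∘ x) Sum.inr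
  proper e := ⟨Fin.natAdd m e, Fin.append_right _ _ e⟩

@[simp]
lemma prefixSubspace_apply {m n : ℕ} (x : Fin m → α) (y : Fin n → α) :
    prefixSubspace x y = Fin.append x y := by
  funext i
  refine Fin.addCases (fun i => ?_) (fun i => ?_) i <;> simp [Subspace.coe_apply, prefixSubspace]

/-- The subspace of words of length `m + n` with suffix `y`. -/
def suffixSubspace {m n : ℕ} (y : Fin n → α) : Subspace (Fin m) α (Fin (m + n)) where
  idxFun := Fin.append Sum.inr (Sum.inl ∘ y)
  proper e := ⟨Fin.castAdd n e, Fin.append_left _ _ e⟩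

@[simp]
lemma suffixSubspace_apply {m n : ℕ} (y : Fin n → α) (x : Fin m → α) :
    suffixSubspace y x = Fin.append x y := by
  funext i
  refine Fin.addCases (fun i => ?_) (fun i => ?_) i <;> simp [Subspace.coe_apply, suffixSubspace]

/-- The product of a one-dimensional subspace `u` and a subspace `v`, with the direction of `u`
first. -/
def subspaceCons {m n d : ℕ} (u : Subspace Unit α (Fin m)) (v : Subspace (Fin d) α (Fin n)) :
    Subspace (Fin (d + 1)) α (Fin (m + n)) where
  idxFun := Fin.append (Sum.map id (fun _ => 0) ∘ u.idxFun) (Sum.map id Fin.succ ∘ v.idxFun)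
  proper e := by
    cases e using Fin.cases with
    | zero =>
      obtain ⟨i, hi⟩ := u.proper ()
      exact ⟨Fin.castAdd n i, by simp [hi]⟩
    | succ e =>
      obtain ⟨i, hi⟩ := v.proper e
      exact ⟨Fin.natAdd m i, by simp [hi]⟩

@[simp]
lemma subspaceCons_apply {m n d : ℕ} (u : Subspace Unit α (Fin m)) (v : Subspace (Fin d) α (Fin n))
    (x : Fin (d + 1) → α) :
    subspaceCons u v x = Fin.append (u fun _ => x 0) (v (Fin.tail x)) := by
  funext i
  refine Fin.addCases (fun i => ?_) (fun i => ?_) i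
  · cases hi : u.idxFun i <;> simp [Subspace.coe_apply, subspaceCons, hi]
  · cases hi : v.idxFun i <;> simp [Subspace.coe_apply, subspaceCons, hi, Fin.tail]

lemma subspaceMap_subspaceCons {m n d : ℕ} (f : α → β) (u : Subspace Unit α (Fin m))
    (v : Subspace (Fin d) α (Fin n)) :
    subspaceMap f (subspaceCons u v) = subspaceCons (subspaceMap f u) (subspaceMap f v) := by
  ext i : 2
  refine Fin.addCases (fun i => ?_) (fun i => ?_) i
  · cases hi : u.idxFun i <;> simp [subspaceMap, subspaceCons, hi]
  · cases hi : v.idxFun i <;> simp [subspaceMap, subspaceCons, hi]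

/-- The word `x` with every wildcard replaced by `a`. -/
def fillWildcards (a : α) (x : ι → Option α) : ι → α := fun i => (x i).getD a

end Subspace

section UniformFibers

variable {β : Type*}

lemma expect_append [Fintype β] {m n : ℕ} (f : (Fin (m + n) → β) → ℝ) :
    𝔼 z, f z = 𝔼 x : Fin m → β, 𝔼 y : Fin n → β, f (Fin.append x y) := by
  rw [← expect_product', univ_product_univ]
  exact (Fintype.expect_equiv (Fin.appendEquiv m n) _ _ fun _ => rfl).symm

lemma density_append [Fintype β] {m n : ℕ} (A : Set (Fin (m + n) → β)) :
    density A = 𝔼 x : Fin m → β, density (Fin.append x ⁻¹' A) :=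
  expect_append _

lemma density_append_left [Fintype β] {m n : ℕ} (A : Set (Fin (m + n) → β)) :
    density A = 𝔼 y : Fin n → β, density {x : Fin m → β | Fin.append x y ∈ A} :=
  (density_append A).trans (expect_density_comm fun x => {y | Fin.append x y ∈ A})

/-- A family of sets of words, indexed by the length, is fibre-closed if it contains with a set
all its sections by a prefix. -/
def FiberClosed (F : ∀ n, Set (Set (Fin n → β))) : Prop :=
  ∀ ⦃m l⦄, ∀ A ∈ F (m + l), ∀ x : Fin m → β, Fin.append x ⁻¹' A ∈ F l

variable [Fintype β] {F : ∀ n, Set (Set (Fin n → β))}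

lemma bddBelow_range_sSup_density :
    BddBelow (Set.range fun n => sSup (density '' F n)) :=
  ⟨0, Set.forall_mem_range.2 fun _ => Real.sSup_nonneg <|
    Set.forall_mem_image.2 fun A _ => density_nonneg A⟩

/-- The infimum over all lengths of the maximal density of a member of the family. For a
fibre-closed family this is the limit of the maximal densities as the length grows. -/
noncomputable def limitDensity (F : ∀ n, Set (Set (Fin n → β))) : ℝ :=
  ⨅ n, sSup (density '' F n)

variable [Nonempty β]

lemma density_le_sSup {n : ℕ} {A : Set (Fin n → β)} (hA : A ∈ F n) :
    density A ≤ sSup (density '' F n) :=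
  le_csSup ⟨1, Set.forall_mem_image.2 fun B _ => density_le_one B⟩ (Set.mem_image_of_mem _ hA)

lemma le_limitDensity {δ : ℝ} (h : ∀ n, ∃ A ∈ F n, δ ≤ density A) : δ ≤ limitDensity F :=
  le_ciInf fun n => by
    obtain ⟨A, hA, hδ⟩ := h n
    exact hδ.trans (density_le_sSup hA)

lemma exists_forall_density_le_limitDensity_add (hF : FiberClosed F) {ε : ℝ} (hε : 0 < ε) :
    ∃ L, ∀ l ≥ L, ∀ A ∈ F l, density A ≤ limitDensity F + ε := by
  obtain ⟨L, hL⟩ := exists_lt_of_ciInf_lt (lt_add_of_pos_right (limitDensity F) hε)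
  refine ⟨L, fun l hl A hA => ?_⟩
  obtain ⟨m, rfl⟩ := Nat.exists_eq_add_of_le' hl
  rw [density_append]
  exact expect_le univ_nonempty fun x _ => (density_le_sSup (hF A hA x)).trans hL.le

lemma exists_forall_limitDensity_sub_le_density_fiber (hF : FiberClosed F)
    (hne : ∀ n, (F n).Nonempty) (m : ℕ) {ε : ℝ} (hε : 0 < ε) :
    ∃ l, ∃ A ∈ F (m + l), ∀ x : Fin m → β, limitDensity F - ε ≤ density (Fin.append x ⁻¹' A) := by
  set K : ℝ := (Fintype.card (Fin m → β) : ℝ)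
  have hK : 0 < K := Nat.cast_pos.2 Fintype.card_pos
  obtain ⟨L, hL⟩ := exists_forall_density_le_limitDensity_add hF (ε := ε / (2 * K)) (by positivity)
  obtain ⟨_, ⟨A, hA, rfl⟩, hAdens⟩ := exists_lt_of_lt_csSup ((hne (m + L)).image density)
    (sub_lt_self _ (by positivity : 0 < ε / (2 * K)))
  have hlim : limitDensity F - ε / (2 * K) ≤ density A :=
    (sub_le_sub_right (ciInf_le bddBelow_range_sSup_density _) _).trans hAdens.le
  set deficit : (Fin m → β) → ℝ := fun x =>
    limitDensity F + ε / (2 * K) - density (Fin.append x ⁻¹' A)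
  have hdeficit : ∀ x, 0 ≤ deficit x := fun x => sub_nonneg.2 (hL L le_rfl _ (hF A hA x))
  refine ⟨L, A, hA, fun x => ?_⟩
  have hbound : deficit x ≤ ε :=
    calc deficit x ≤ ∑ x, deficit x := single_le_sum (fun x _ => hdeficit x) (mem_univ x)
      _ = K * (limitDensity F + ε / (2 * K) - density A) := by
        rw [← Fintype.card_mul_expect, expect_sub_distrib, Fintype.expect_const, density_append]
      _ ≤ K * (ε / (2 * K) + ε / (2 * K)) := by gcongr; linarith
      _ = ε := by field_simp; ring
  have : 0 < ε / (2 * K) := by positivity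
  linarith

end UniformFibers

section DensityHalesJewett

variable {α : Type*} [Fintype α]

/-- The density Hales–Jewett property of an alphabet `α`: every dense set of sufficiently long
words over `α` contains a combinatorial line. -/
def DensityHalesJewett (α : Type*) [Fintype α] : Prop :=
  ∀ δ > 0, ∃ n, ∀ A : Set (Fin n → α), δ ≤ density A → ∃ l : Line α (Fin n), ∀ a, l a ∈ A

namespace DensityHalesJewett

lemma exists_line_le_density (h : DensityHalesJewett α) {δ : ℝ} (hδ : 0 < δ) :
    ∃ m, ∃ θ > 0, ∀ (Y : Type*) [Fintype Y] (A : (Fin m → α) → Set Y),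
      δ ≤ 𝔼 x, density (A x) → ∃ l : Line α (Fin m), θ ≤ density {y | ∀ a, y ∈ A (l a)} := by
  obtain ⟨m, hm⟩ := h (δ / 2) (half_pos hδ)
  have := Fintype.ofFinite (Line α (Fin m))
  refine ⟨m, δ / 2 / (Fintype.card (Line α (Fin m)) + 1), by positivity, fun Y _ A hA => ?_⟩
  rw [expect_density_comm] at hA
  have : Nonempty Y := by
    by_contra hY
    rw [not_nonempty_iff] at hY
    rw [univ_eq_empty, expect_empty] at hA
    exact hA.not_gt hδ
  have : Nonempty (Fin m → α) := by
    obtain ⟨y, -, hy⟩ := exists_le_of_le_expect univ_nonempty hA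
    exact ⟨(nonempty_of_density_pos (hδ.trans_le hy)).some⟩
  have hmarkov := le_density_of_le_expect (fun y => density_le_one {x | y ∈ A x}) hδ.le hA
  obtain ⟨l, hl⟩ := exists_density_le_card_mul_of_subset_iUnion
    (Q := fun l : Line α (Fin m) => {y | ∀ a, y ∈ A (l a)}) ((half_pos hδ).trans_le hmarkov)
    fun y hy => Set.mem_iUnion.2 (hm {x | y ∈ A x} hy)
  refine ⟨l, (div_le_iff₀ (by positivity)).2 ?_⟩
  linarith [density_nonneg {y | ∀ a, y ∈ A (l a)}]

lemma exists_subspace (h : DensityHalesJewett α) (d : ℕ) {δ : ℝ} (hδ : 0 < δ) :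
    ∃ n, ∀ A : Set (Fin n → α), δ ≤ density A →
      ∃ v : Subspace (Fin d) α (Fin n), ∀ x, v x ∈ A := by
  induction d generalizing δ with
  | zero =>
    refine ⟨0, fun A hA => ⟨default, fun x => ?_⟩⟩
    obtain ⟨y, hy⟩ := nonempty_of_density_pos (hδ.trans_le hA)
    exact Set.mem_of_eq_of_mem (Subsingleton.elim _ y) hy
  | succ d ih =>
    obtain ⟨m, θ, hθ, hm⟩ := h.exists_line_le_density hδ
    obtain ⟨n, hn⟩ := ih hθ
    refine ⟨m + n, fun A hA => ?_⟩
    rw [density_append] at hA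
    obtain ⟨l, hl⟩ := hm _ _ hA
    obtain ⟨v, hv⟩ := hn _ hl
    refine ⟨subspaceCons l.toSubspaceUnit v, fun x => ?_⟩
    rw [subspaceCons_apply, Line.toSubspaceUnit_apply]
    exact hv (Fin.tail x) (x 0)

end DensityHalesJewett

end DensityHalesJewett

section GrahamRothschild

universe u v

variable {α : Type u} {C : Type v}

/-- A colouring of words with wildcards is initial if it depends only on the part of the word up
to the first wildcard. -/
def IsInitialColoring {n : ℕ} (c : (Fin n → Option α) → C) : Prop :=
  ∀ ⦃i l w⦄, l i = none → (∀ j ≤ i, l j = w j) → c l = c w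

/-- The product of the subspace `v` and a new first direction, pushed into a larger cube by the
template `τ`, whose wildcards are also filled from the new direction. -/
def subspaceConsWildcard {m n N : ℕ} (τ : Subspace (Fin n) (Option α) (Fin N))
    (v : Subspace (Fin m) α (Fin n)) : Subspace (Fin (m + 1)) α (Fin (N + 1)) where
  idxFun := Fin.cons (.inr 0) fun i =>
    (τ.idxFun i).elim (fun o => o.elim (.inr 0) .inl) fun j => (v.idxFun j).map id Fin.succ
  proper e := by
    cases e using Fin.cases with
    | zero => exact ⟨0, rfl⟩
    | succ e =>
      obtain ⟨j, hj⟩ := v.proper e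
      obtain ⟨i, hi⟩ := τ.proper j
      exact ⟨i.succ, by simp [hi, hj]⟩

lemma subspaceMap_some_subspaceConsWildcard {m n N : ℕ} (τ : Subspace (Fin n) (Option α) (Fin N))
    (v : Subspace (Fin m) α (Fin n)) (l : Fin (m + 1) → Option α) :
    subspaceMap some (subspaceConsWildcard τ v) l =
      Fin.cons (l 0)
        (subspaceMap (fun o => o.elim (l 0) some) τ (subspaceMap some v (Fin.tail l))) := by
  funext i
  cases i using Fin.cases with
  | zero => simp [Subspace.coe_apply, subspaceMap, subspaceConsWildcard]
  | succ i =>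
    rcases hi : τ.idxFun i with (_ | a) | j
    · simp [Subspace.coe_apply, subspaceMap, subspaceConsWildcard, hi]
    · simp [Subspace.coe_apply, subspaceMap, subspaceConsWildcard, hi]
    · cases hj : v.idxFun j <;>
        simp [Subspace.coe_apply, subspaceMap, subspaceConsWildcard, hi, hj, Fin.tail]

lemma exists_isInitialColoring_subspace (α : Type u) [Finite α] (M : ℕ) :
    ∀ (C : Type (max u v)) [Finite C], ∃ n, ∀ c : (Fin n → Option α) → C,
      ∃ v : Subspace (Fin M) α (Fin n), IsInitialColoring (c ∘ subspaceMap some v) := by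
  induction M with
  | zero => exact fun C _ => ⟨0, fun c => ⟨default, fun i => i.elim0⟩⟩
  | succ M ih =>
    intro C _
    obtain ⟨n, hn⟩ := ih (Option α → C)
    obtain ⟨N, hN⟩ := Subspace.exists_mono_in_high_dimension_fin (Option α) C (Fin n)
    refine ⟨N + 1, fun c => ?_⟩
    obtain ⟨τ, c₀, hτ⟩ := hN fun x => c (Fin.cons none x)
    obtain ⟨v, hv⟩ := hn fun w o => c (Fin.cons o (subspaceMap (fun p => p.elim o some) τ w))
    refine ⟨subspaceConsWildcard τ v, fun i l l' hi hll' => ?_⟩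
    simp only [Function.comp_apply, subspaceMap_some_subspaceConsWildcard]
    rw [← hll' 0 i.zero_le]
    cases i using Fin.cases with
    | zero =>
      have hmono : ∀ w, c (Fin.cons none (subspaceMap (fun p => p.elim none some) τ w)) = c₀ := by
        intro w
        rw [← hτ w]
        congr 2
        funext i
        rcases hi : τ.idxFun i with (_ | a) | j <;> simp [Subspace.coe_apply, subspaceMap, hi]
      rw [hi, hmono, hmono]
    | succ i =>
      exact congrFun (hv (i := i) (l := Fin.tail l) (w := Fin.tail l') hi
        fun j hj => hll' j.succ (Fin.succ_le_succ_iff.2 hj)) (l 0)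

lemma IsInitialColoring.append_some {m n : ℕ} {c : (Fin (m + n) → Option α) → C}
    (hc : IsInitialColoring c) (r : Fin m → α) :
    IsInitialColoring fun l => c (Fin.append (some ∘ r) l) := by
  intro i l l' hi hll'
  refine hc (i := Fin.natAdd m i) (by simpa using hi) fun j hj => ?_
  cases j using Fin.addCases with
  | left j => simp
  | right j => simpa using hll' j (by simpa using hj)

lemma IsInitialColoring.append_eq {m n : ℕ} {c : (Fin (m + n) → Option α) → C}
    (hc : IsInitialColoring c) {w : Fin m → Option α} {i : Fin m} (hi : w i = none)
    (l l' : Fin n → Option α) : c (Fin.append w l) = c (Fin.append w l') := by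
  refine hc (i := Fin.castAdd n i) (by simpa using hi) fun j hj => ?_
  cases j using Fin.addCases with
  | left j => simp
  | right j =>
    rw [Fin.le_def, Fin.val_natAdd, Fin.val_castAdd] at hj
    lia

lemma subspaceMap_some_apply_none {η ι : Type*} (v : Subspace η α ι) {l : η → Option α} {e : η}
    (he : l e = none) : ∃ i, subspaceMap some v l i = none := by
  obtain ⟨i, hi⟩ := (subspaceMap some v).proper e
  exact ⟨i, (Subspace.apply_inr hi).trans he⟩

lemma exists_subspace_color_eq_first_wildcard (α : Type u) [Finite α] [Nonempty α] (C : Type v)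
    [Finite C] (m : ℕ) :
    ∃ M, ∀ c : (Fin M → Option α) → C, IsInitialColoring c →
      ∃ (v : Subspace (Fin m) α (Fin M)) (g : Fin m → C), ∀ l e, l e = none →
        (∀ e' < e, l e' ≠ none) → c (subspaceMap some v l) = g e := by
  induction m with
  | zero => exact ⟨0, fun c _ => ⟨default, Fin.elim0, fun l e => e.elim0⟩⟩
  | succ m ih =>
    obtain ⟨M, hM⟩ := ih
    obtain ⟨N, hN⟩ :=
      Subspace.exists_mono_in_high_dimension_fin α ((Fin M → Option α) → C) Unit
    refine ⟨N + M, fun c hc => ?_⟩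
    obtain ⟨τ, c₀, hτ⟩ := hN fun r l => c (Fin.append (some ∘ r) l)
    have hc₀ : IsInitialColoring c₀ := by
      rw [← hτ fun _ => Classical.arbitrary α]
      exact hc.append_some _
    obtain ⟨v, g, hg⟩ := hM c₀ hc₀
    set w := subspaceMap some τ fun _ => none
    refine ⟨subspaceCons τ v, Fin.cons (c (Fin.append w fun _ => none)) g, fun l e he hlt => ?_⟩
    rw [subspaceMap_subspaceCons, subspaceCons_apply]
    cases e using Fin.cases with
    | zero =>
      rw [he, Fin.cons_zero]
      obtain ⟨i, hi⟩ := subspaceMap_some_apply_none τ (l := fun _ => none) (e := ()) rfl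
      exact hc.append_eq hi _ _
    | succ e =>
      obtain ⟨a, ha⟩ := Option.ne_none_iff_exists'.1 (hlt 0 e.succ_pos)
      have hprefix : subspaceMap some τ (fun _ => l 0) = some ∘ τ fun _ => a := by
        rw [ha]
        exact subspaceMap_apply_comp some τ fun _ => a
      rw [hprefix, Fin.cons_succ, ← hg (Fin.tail l) e he
        fun e' he' => hlt e'.succ (Fin.succ_lt_succ_iff.2 he'), ← hτ]

/-- The subspace in which only the coordinates in the range of `φ` vary, the others being `a`. -/
noncomputable def subspaceOfEmbedding {η ι : Type*} (φ : η ↪ ι) (a : α) : Subspace η α ι where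
  idxFun := Function.extend φ Sum.inr fun _ => Sum.inl a
  proper e := ⟨φ e, φ.injective.extend_apply _ _ e⟩

lemma subspaceMap_some_subspaceOfEmbedding_apply {η ι : Type*} (φ : η ↪ ι) (a : α)
    (l : η → Option α) (e : η) : subspaceMap some (subspaceOfEmbedding φ a) l (φ e) = l e := by
  simp [Subspace.coe_apply, subspaceMap, subspaceOfEmbedding, φ.injective.extend_apply]

lemma exists_eq_of_subspaceMap_some_subspaceOfEmbedding_eq_none {η ι : Type*} {φ : η ↪ ι} {a : α}
    {l : η → Option α} {i : ι} (h : subspaceMap some (subspaceOfEmbedding φ a) l i = none) :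
    ∃ e, φ e = i ∧ l e = none := by
  by_cases hi : ∃ e, φ e = i
  · obtain ⟨e, rfl⟩ := hi
    exact ⟨e, rfl, (subspaceMap_some_subspaceOfEmbedding_apply φ a l e).symm.trans h⟩
  · simp [Subspace.coe_apply, subspaceMap, subspaceOfEmbedding,
      Function.extend_apply' _ _ _ hi] at h

lemma exists_subspace_forall_line_color_eq (α : Type u) [Finite α] [Nonempty α] (C : Type v)
    [Finite C] (m : ℕ) :
    ∃ n, ∀ c : (Fin n → Option α) → C, ∃ (v : Subspace (Fin m) α (Fin n)) (c₀ : C),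
      ∀ l, c (lineComp v l).idxFun = c₀ := by
  classical
  cases nonempty_fintype C
  rcases isEmpty_or_nonempty C with hC | hC
  · exact ⟨0, fun c => hC.elim (c Fin.elim0)⟩
  obtain ⟨M, hM⟩ := exists_subspace_color_eq_first_wildcard α C (Fintype.card C * m)
  obtain ⟨n, hn⟩ := exists_isInitialColoring_subspace.{u, v} α M (ULift.{u} C)
  refine ⟨n, fun c => ?_⟩
  obtain ⟨v, hv⟩ := hn (ULift.up ∘ c)
  obtain ⟨u, g, hg⟩ := hM (c ∘ subspaceMap some v)
    fun i l l' hi hll' => ULift.up_injective (hv hi hll')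
  obtain ⟨c₀, hc₀⟩ := Fintype.exists_le_card_fiber_of_mul_le_card g (n := m) (by simp)
  set φ := orderEmbOfCardLe _ hc₀
  set w := subspaceOfEmbedding φ.toEmbedding (Classical.arbitrary α)
  refine ⟨subspaceComp v (subspaceComp u w), c₀, fun l => ?_⟩
  obtain ⟨e, he, hmin⟩ := wellFounded_lt.has_min {e | l.idxFun e = none} l.proper
  rw [← subspaceMap_some_idxFun, subspaceMap_subspaceComp, subspaceMap_subspaceComp,
    ← (mem_filter.1 (orderEmbOfCardLe_mem _ hc₀ e)).2]
  refine hg _ (φ e) ((subspaceMap_some_subspaceOfEmbedding_apply _ _ _ e).trans he) ?_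
  intro i hi hnone
  obtain ⟨e', rfl, he'⟩ := exists_eq_of_subspaceMap_some_subspaceOfEmbedding_eq_none hnone
  exact hmin e' he' (φ.lt_iff_lt.1 hi)

end GrahamRothschild

namespace DensityHalesJewett

lemma exists_subspace_forall_line_le_density {α : Type*} [Fintype α] [Nonempty α]
    (h : DensityHalesJewett α) {δ : ℝ} (hδ : 0 < δ) :
    ∃ θ > 0, ∀ M, ∃ n, ∀ (Y : Type*) [Fintype Y] (A : (Fin n → α) → Set Y),
      (∀ x, δ ≤ density (A x)) → ∃ v : Subspace (Fin M) α (Fin n),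
        ∀ l : Line α (Fin M), θ ≤ density {y | ∀ a, y ∈ A (v (l a))} := by
  obtain ⟨m, θ, hθ, hm⟩ := h.exists_line_le_density hδ
  refine ⟨θ, hθ, fun M => ?_⟩
  obtain ⟨n, hn⟩ := exists_subspace_forall_line_color_eq α Prop (m + M)
  refine ⟨n, fun Y _ A hA => ?_⟩
  obtain ⟨v, popular, hv⟩ := hn fun w => θ ≤ density {y | ∀ a, y ∈ A (fillWildcards a w)}
  have hline : ∀ l : Line α (Fin (m + M)),
      θ ≤ density {y | ∀ a, y ∈ A (v (l a))} ↔ popular := fun l => by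
    simp_rw [← lineComp_apply]
    exact Eq.to_iff (hv l)
  have hpopular : popular := by
    obtain ⟨a⟩ := ‹Nonempty α›
    obtain ⟨l, hl⟩ := hm Y (fun x => A (v (Fin.append x fun _ => a)))
      (le_expect univ_nonempty fun x _ => hA _)
    rw [← hline (lineComp (suffixSubspace fun _ => a) l)]
    simpa only [lineComp_apply, suffixSubspace_apply] using hl
  obtain ⟨a⟩ := ‹Nonempty α›
  refine ⟨subspaceComp v (prefixSubspace fun _ => a), fun l => ?_⟩
  have := (hline (lineComp (prefixSubspace fun _ => a) l)).2 hpopular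
  simpa only [subspaceComp_apply, lineComp_apply] using this

end DensityHalesJewett

section Insensitive

variable {α η ι : Type*}

/-- A set of words over `Option α` is `a`-insensitive if replacing wildcards by `a`, or conversely,
does not affect membership. -/
def IsInsensitive (a : α) (E : Set (ι → Option α)) : Prop :=
  ∀ ⦃x x'⦄, fillWildcards a x = fillWildcards a x' → (x ∈ E ↔ x' ∈ E)

lemma IsInsensitive.compl {a : α} {E : Set (ι → Option α)} (hE : IsInsensitive a E) :
    IsInsensitive a Eᶜ :=
  fun _ _ h => not_congr (hE h)

lemma isInsensitive_setOf_fillWildcards_mem (a : α) (B : Set (ι → Option α)) :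
    IsInsensitive a {x | some ∘ fillWildcards a x ∈ B} :=
  fun _ _ h => by simp only [Set.mem_ofPred_eq, h]

lemma fillWildcards_subspace_congr {a : α} (v : Subspace η (Option α) ι) {x x' : η → Option α}
    (h : fillWildcards a x = fillWildcards a x') :
    fillWildcards a (v x) = fillWildcards a (v x') := by
  funext i
  cases hi : v.idxFun i with
  | inl o => simp [fillWildcards, Subspace.coe_apply, hi]
  | inr e => simpa [fillWildcards, Subspace.coe_apply, hi] using congrFun h e

lemma IsInsensitive.preimage_subspace {a : α} {E : Set (ι → Option α)} (hE : IsInsensitive a E)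
    (v : Subspace η (Option α) ι) : IsInsensitive a (v ⁻¹' E) :=
  fun _ _ h => hE (fillWildcards_subspace_congr v h)

lemma IsInsensitive.preimage_append {a : α} {m n : ℕ} {E : Set (Fin (m + n) → Option α)}
    (hE : IsInsensitive a E) (x : Fin m → Option α) : IsInsensitive a (Fin.append x ⁻¹' E) := by
  simpa only [Set.preimage, prefixSubspace_apply] using hE.preimage_subspace (prefixSubspace x)

lemma IsInsensitive.preimage_append_left {a : α} {m n : ℕ} {E : Set (Fin (m + n) → Option α)}
    (hE : IsInsensitive a E) (y : Fin n → Option α) :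
    IsInsensitive a {x | Fin.append x y ∈ E} := by
  simpa only [Set.preimage, suffixSubspace_apply] using hE.preimage_subspace (suffixSubspace y)

lemma IsInsensitive.setOf_append_mem_and_notMem {a : α} {m n : ℕ}
    {E : Set (Fin (m + n) → Option α)} (hE : IsInsensitive a E)
    (R : Set (Fin m → Option α) → Set (Fin m → Option α)) (x : Fin m → Option α) :
    IsInsensitive a {y | Fin.append x y ∈ E ∧ x ∉ R {x' | Fin.append x' y ∈ E}} := by
  intro y y' hyy'
  have hfiber : {x' | Fin.append x' y ∈ E} = {x' | Fin.append x' y' ∈ E} :=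
    Set.ext fun x' => hE.preimage_append x' hyy'
  simp only [Set.mem_ofPred_eq, hfiber, and_congr_left_iff]
  exact fun _ => hE.preimage_append x hyy'

variable [Fintype α] [Nonempty α]

lemma DensityHalesJewett.exists_subspace_of_isInsensitive (h : DensityHalesJewett α) (a : α)
    (d : ℕ) {δ : ℝ} (hδ : 0 < δ) :
    ∃ n, ∀ E : Set (Fin n → Option α), IsInsensitive a E → δ ≤ density E →
      ∃ v : Subspace (Fin d) (Option α) (Fin n), ∀ x, v x ∈ E := by
  let F (n : ℕ) : Set (Set (Fin n → Option α)) :=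
    {E | IsInsensitive a E ∧ ∀ v : Subspace (Fin d) (Option α) (Fin n), ∃ x, v x ∉ E}
  have hF : FiberClosed F := fun m l E hE x => by
    refine ⟨hE.1.preimage_append x, fun v => ?_⟩
    obtain ⟨z, hz⟩ := hE.2 (subspaceComp (prefixSubspace x) v)
    exact ⟨z, by simpa using hz⟩
  by_contra! hcon
  have hdense : ∀ n, ∃ E ∈ F n, δ ≤ density E := fun n => by
    obtain ⟨E, hE, hEδ, hv⟩ := hcon n
    exact ⟨E, ⟨hE, hv⟩, hEδ⟩
  have hlim : 0 < limitDensity F := hδ.trans_le (le_limitDensity hdense)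
  obtain ⟨n, hn⟩ := h.exists_subspace d (half_pos hlim)
  obtain ⟨l, E, ⟨hE, hEv⟩, hfiber⟩ := exists_forall_limitDensity_sub_le_density_fiber hF
    (fun n => (hdense n).imp fun _ => And.left) n (half_pos hlim)
  have hmean : limitDensity F / 2 ≤ 𝔼 x : Fin n → α, density (Fin.append (some ∘ x) ⁻¹' E) :=
    le_expect univ_nonempty fun x _ => by linarith [hfiber (some ∘ x)]
  rw [expect_density_comm] at hmean
  obtain ⟨y, -, hy⟩ := exists_le_of_le_expect univ_nonempty hmean
  obtain ⟨v, hv⟩ := hn _ hy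
  obtain ⟨z, hz⟩ := hEv (subspaceComp (suffixSubspace y) (subspaceMap some v))
  rw [subspaceComp_apply, suffixSubspace_apply] at hz
  have hfill : fillWildcards a (some ∘ fillWildcards a z) = fillWildcards a z := rfl
  refine hz ((hE.preimage_append_left y (fillWildcards_subspace_congr _ hfill)).1 ?_)
  rw [subspaceMap_apply_comp]
  exact hv (fillWildcards a z)

end Insensitive

section SubspaceAverages

variable {α : Type*} [Fintype α]

/-- The average of `f` over every `d`-dimensional subspace is at most `t`. -/
def SubspaceAveragesLE (d : ℕ) {n : ℕ} (f : (Fin n → Option α) → ℝ) (t : ℝ) : Prop :=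
  ∀ v : Subspace (Fin d) (Option α) (Fin n), 𝔼 x, f (v x) ≤ t

namespace SubspaceAveragesLE

variable {d m n : ℕ} {t : ℝ}

lemma comp_subspace {f : (Fin n → Option α) → ℝ} (hf : SubspaceAveragesLE d f t)
    (v : Subspace (Fin m) (Option α) (Fin n)) : SubspaceAveragesLE d (f ∘ v) t :=
  fun u => by simpa only [subspaceComp_apply, Function.comp_apply] using hf (subspaceComp v u)

variable {f : (Fin (m + n) → Option α) → ℝ}

lemma comp_append (hf : SubspaceAveragesLE d f t) (x : Fin m → Option α) :
    SubspaceAveragesLE d (fun y => f (Fin.append x y)) t := by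
  simpa only [Function.comp_def, prefixSubspace_apply] using hf.comp_subspace (prefixSubspace x)

lemma comp_append_left (hf : SubspaceAveragesLE d f t) (y : Fin n → Option α) :
    SubspaceAveragesLE d (fun x => f (Fin.append x y)) t := by
  simpa only [Function.comp_def, suffixSubspace_apply] using hf.comp_subspace (suffixSubspace y)

end SubspaceAveragesLE

namespace DensityHalesJewett

variable [Nonempty α]

lemma exists_subset_expect_indicator_le (h : DensityHalesJewett α) (a : α) (d : ℕ) {η : ℝ}
    (hη : 0 < η) :
    ∃ M, ∃ κ ∈ Set.Ioc (0 : ℝ) 1, ∀ U : Set (Fin M → Option α), IsInsensitive a U →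
      ∃ R ⊆ U, κ * (density U - η) ≤ density R ∧ ∀ f t, SubspaceAveragesLE d f t →
        𝔼 x, R.indicator f x ≤ t * density R := by
  obtain ⟨M, hM⟩ := h.exists_subspace_of_isInsensitive a d hη
  have hcard : (1 : ℝ) ≤ Fintype.card (Fin M → Option α) := Nat.one_le_cast.2 Fintype.card_pos
  refine ⟨M, (Fintype.card (Fin M → Option α) : ℝ)⁻¹, ⟨by positivity, inv_le_one_of_one_le₀ hcard⟩,
    fun U hU => ?_⟩
  obtain hUη | hUη := le_or_gt η (density U)
  · obtain ⟨v, hv⟩ := hM U hU hUη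
    refine ⟨Set.range v, Set.range_subset_iff.2 hv, ?_, fun f t hf => ?_⟩
    · rw [density_range (subspace_injective v), inv_mul_eq_div]
      have : (1 : ℝ) ≤ Fintype.card (Fin d → Option α) := Nat.one_le_cast.2 Fintype.card_pos
      gcongr
      linarith [density_le_one U]
    · rw [expect_indicator_range (subspace_injective v), density_range (subspace_injective v)]
      gcongr
      exact hf v
  · refine ⟨∅, Set.empty_subset U, ?_, fun f t _ => by simp [density_empty]⟩
    rw [density_empty]
    exact mul_nonpos_of_nonneg_of_nonpos (by positivity) (by linarith)

end DensityHalesJewett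

lemma expect_indicator_append_eq_add {M n : ℕ} {E : Set (Fin (M + n) → Option α)}
    (R : (Fin n → Option α) → Set (Fin M → Option α))
    (hR : ∀ y, R y ⊆ {x | Fin.append x y ∈ E}) (f : (Fin (M + n) → Option α) → ℝ) :
    𝔼 z, E.indicator f z = 𝔼 y, 𝔼 x, (R y).indicator (fun x => f (Fin.append x y)) x +
      𝔼 x, 𝔼 y, {y | Fin.append x y ∈ E ∧ x ∉ R y}.indicator (fun y => f (Fin.append x y)) y := by
  rw [expect_append, expect_comm (f := fun y x => (R y).indicator (fun x => f (Fin.append x y)) x),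
    ← expect_add_distrib]
  refine expect_congr rfl fun x _ => ?_
  rw [← expect_add_distrib]
  refine expect_congr rfl fun y _ => ?_
  by_cases hx : x ∈ R y
  · have hE : Fin.append x y ∈ E := hR y hx
    simp [hx, hE]
  · by_cases hE : Fin.append x y ∈ E <;> simp [hx, hE]

lemma DensityHalesJewett.exists_expect_indicator_le_add_pow [Nonempty α]
    (h : DensityHalesJewett α) (a : α) (d : ℕ) {η : ℝ} (hη : 0 < η) :
    ∃ M, ∃ κ ∈ Set.Ioc (0 : ℝ) 1, ∀ s, ∀ n ≥ s * M, ∀ (E : Set (Fin n → Option α))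
      (f : (Fin n → Option α) → ℝ) (t : ℝ), IsInsensitive a E → (∀ x, f x ≤ 1) → 0 ≤ t →
      SubspaceAveragesLE d f t →
      𝔼 x, E.indicator f x ≤ t * density E + η + (1 - κ) ^ s * (density E - η) := by
  obtain ⟨M, κ, hκ, hM⟩ := h.exists_subset_expect_indicator_le a d hη
  choose! R hRsub hRdens hRavg using hM
  refine ⟨M, κ, hκ, fun s => ?_⟩
  induction s with
  | zero =>
    intro n _ E f t _ hf ht _
    have : 𝔼 x, E.indicator f x ≤ density E :=
      expect_le_expect fun x _ => Set.indicator_le_indicator (hf x)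
    linarith [mul_nonneg ht (density_nonneg E)]
  | succ s ih =>
    intro n hn E f t hE hf ht hft
    rw [Nat.succ_mul, add_comm] at hn
    obtain ⟨n, rfl⟩ := Nat.exists_eq_add_of_le (le_of_add_le_left hn)
    set U : (Fin n → Option α) → Set (Fin M → Option α) := fun y => {x | Fin.append x y ∈ E}
    have hU : ∀ y, IsInsensitive a (U y) := hE.preimage_append_left
    set E' : (Fin M → Option α) → Set (Fin n → Option α) :=
      fun x => {y | Fin.append x y ∈ E ∧ x ∉ R (U y)}
    have hE' : ∀ x, IsInsensitive a (E' x) := hE.setOf_append_mem_and_notMem R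
    have hsplit := expect_indicator_append_eq_add (fun y => R (U y)) (fun y => hRsub _ (hU y))
    have hdens : density E = 𝔼 y, density (R (U y)) + 𝔼 x, density (E' x) := hsplit 1
    have hremoved : 𝔼 y, 𝔼 x, (R (U y)).indicator (fun x => f (Fin.append x y)) x ≤
        t * 𝔼 y, density (R (U y)) := by
      rw [mul_expect]
      exact expect_le_expect fun y _ => hRavg _ (hU y) _ _ (hft.comp_append_left y)
    have hkept : 𝔼 x, 𝔼 y, (E' x).indicator (fun y => f (Fin.append x y)) y ≤
        t * 𝔼 x, density (E' x) + η + (1 - κ) ^ s * (𝔼 x, density (E' x) - η) := by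
      refine (expect_le_expect fun x _ => ih n (by lia) (E' x) _ t (hE' x) (fun y => hf _) ht
        (hft.comp_append x)).trans_eq ?_
      simp only [expect_add_distrib, ← mul_expect, expect_sub_distrib, Fintype.expect_const]
    have hlarge : κ * (density E - η) ≤ 𝔼 y, density (R (U y)) := by
      refine le_trans (le_of_eq ?_) (expect_le_expect fun y _ => hRdens _ (hU y))
      rw [← mul_expect, expect_sub_distrib, Fintype.expect_const, ← density_append_left]
    have hpow : (1 - κ) ^ s * (𝔼 x, density (E' x) - η) ≤ (1 - κ) ^ (s + 1) * (density E - η) := by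
      rw [pow_succ, mul_assoc]
      exact mul_le_mul_of_nonneg_left (by linarith) (pow_nonneg (by linarith [hκ.2]) s)
    rw [hsplit f]
    linarith [congrArg (t * ·) hdens]

lemma DensityHalesJewett.exists_expect_indicator_le_add [Nonempty α] (h : DensityHalesJewett α)
    (a : α) (d : ℕ) {η : ℝ} (hη : 0 < η) :
    ∃ N, ∀ n ≥ N, ∀ (E : Set (Fin n → Option α)) (f : (Fin n → Option α) → ℝ) (t : ℝ),
      IsInsensitive a E → (∀ x, f x ≤ 1) → 0 ≤ t → SubspaceAveragesLE d f t →
      𝔼 x, E.indicator f x ≤ t + η := by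
  obtain ⟨M, κ, hκ, hM⟩ := h.exists_expect_indicator_le_add_pow a d (half_pos hη)
  obtain ⟨s, hs⟩ := exists_pow_lt_of_lt_one (half_pos hη) (by linarith [hκ.1] : 1 - κ < 1)
  refine ⟨s * M, fun n hn E f t hE hf ht hft => (hM s n hn E f t hE hf ht hft).trans ?_⟩
  have hpow : (1 - κ) ^ s * (density E - η / 2) ≤ η / 2 := by
    have : 0 ≤ (1 - κ) ^ s := pow_nonneg (by linarith [hκ.2]) s
    exact (mul_le_of_le_one_right this (by linarith [density_le_one E])).trans hs.le
  linarith [mul_le_of_le_one_right ht (density_le_one E)]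

lemma indicator_compl_inter_add {X : Type*} (D P : Set X) (f : X → ℝ) :
    (D ∩ P)ᶜ.indicator f = Dᶜ.indicator f + D.indicator (Pᶜ.indicator f) := by
  classical
  funext x
  by_cases hD : x ∈ D <;> by_cases hP : x ∈ P <;> simp [hD, hP]

lemma DensityHalesJewett.exists_expect_indicator_compl_iInter_le [Nonempty α]
    (h : DensityHalesJewett α) (d : ℕ) (s : Finset α) {η : ℝ} (hη : 0 < η) :
    ∃ N, ∀ n ≥ N, ∀ (D : α → Set (Fin n → Option α)) (f : (Fin n → Option α) → ℝ),
      (∀ a, IsInsensitive a (D a)) → (∀ x, f x ≤ 1) → SubspaceAveragesLE d f 0 →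
      𝔼 x, (⋂ a ∈ s, D a)ᶜ.indicator f x ≤ η := by
  classical
  induction s using Finset.induction_on generalizing η with
  | empty => exact ⟨0, fun n _ D f _ _ _ => by simpa using hη.le⟩
  | insert a s _ ih =>
    obtain ⟨d', hd'⟩ := ih (by positivity : 0 < η / 3)
    obtain ⟨N, hN⟩ := h.exists_expect_indicator_le_add a d (by positivity : 0 < η / 3)
    obtain ⟨N', hN'⟩ := h.exists_expect_indicator_le_add a d' (by positivity : 0 < η / 3)
    refine ⟨max N N', fun n hn D f hD hf hft => ?_⟩
    have hcompl : 𝔼 x, (D a)ᶜ.indicator f x ≤ 0 + η / 3 :=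
      hN n (le_of_max_le_left hn) _ f 0 (hD a).compl hf le_rfl hft
    have haverages : SubspaceAveragesLE d' ((⋂ b ∈ s, D b)ᶜ.indicator f) (η / 3) := fun v => by
      have := hd' d' le_rfl (fun b => v ⁻¹' D b) (f ∘ v) (fun b => (hD b).preimage_subspace v)
        (fun x => hf (v x)) (hft.comp_subspace v)
      simpa only [← Set.preimage_iInter, ← Set.preimage_compl, ← Set.indicator_comp_right]
        using this
    have hinter : 𝔼 x, (D a).indicator ((⋂ b ∈ s, D b)ᶜ.indicator f) x ≤ η / 3 + η / 3 :=
      hN' n (le_of_max_le_right hn) _ _ _ (hD a)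
        (fun x => Set.indicator_apply_le' (fun _ => hf x) fun _ => zero_le_one) (by positivity)
        haverages
    rw [set_biInter_insert, indicator_compl_inter_add]
    simp only [Pi.add_apply, expect_add_distrib]
    linarith

end SubspaceAverages

section Step

variable {α η ι : Type*}

/-- A set of words is line-free if it contains no combinatorial line. -/
def LineFree (A : Set (ι → α)) : Prop := ∀ l : Line α ι, ∃ a, l a ∉ A

lemma LineFree.preimage_subspace {A : Set (ι → α)} (hA : LineFree A) (v : Subspace η α ι) :
    LineFree (v ⁻¹' A) :=
  fun l => by simpa only [lineComp_apply, Set.mem_preimage] using hA (lineComp v l)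

lemma LineFree.notMem_of_forall_fillWildcards_mem {A : Set (ι → Option α)} (hA : LineFree A)
    {x : ι → Option α} (hx : ∃ i, x i = none) (h : ∀ a, some ∘ fillWildcards a x ∈ A) : x ∉ A := by
  intro hxA
  obtain ⟨i, hi⟩ := hx
  obtain ⟨o, ho⟩ := hA ⟨fun i => (x i).map some, i, by rw [hi, Option.map_none]⟩
  refine ho (Set.mem_of_eq_of_mem ?_ (Option.rec hxA h o :
    (o.elim x fun a => some ∘ fillWildcards a x) ∈ A))
  funext i
  cases hi : x i <;> cases o <;> simp [Line.coe_apply, fillWildcards, hi]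

lemma exists_forall_density_forall_ne_none_le (α : Type*) [Fintype α] [Nonempty α]
    {ε : ℝ} (hε : 0 < ε) :
    ∃ M, ∀ m ≥ M, density {x : Fin m → Option α | ∀ i, x i ≠ none} ≤ ε := by
  set r : ℝ := Fintype.card α / Fintype.card (Option α)
  have hr0 : 0 ≤ r := by positivity
  have hr : r < 1 := by
    rw [div_lt_one (Nat.cast_pos.2 Fintype.card_pos), Nat.cast_lt, Fintype.card_option]
    exact Nat.lt_succ_self _
  obtain ⟨M, hM⟩ := exists_pow_lt_of_lt_one hε hr
  refine ⟨M, fun m hm => ?_⟩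
  have hrange : {x : Fin m → Option α | ∀ i, x i ≠ none} =
      Set.range fun x : Fin m → α => some ∘ x := by
    ext x
    simp only [Set.mem_ofPred_eq, Option.ne_none_iff_exists', Set.mem_range, funext_iff]
    exact Classical.skolem.trans (exists_congr fun y => forall_congr' fun i => eq_comm)
  rw [hrange, density_range (Option.some_injective _).comp_left]
  simp only [Fintype.card_fun, Fintype.card_fin, Nat.cast_pow, ← div_pow]
  exact (pow_le_pow_of_le_one hr0 hr.le hm).trans hM.le

lemma exists_le_expect_indicator_compl {X Y : Type*} [Fintype X] [Nonempty X] [Fintype Y]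
    [Nonempty Y] {B P : Y → Set X} {W : Set X} {β θ c : ℝ} (hc : 0 ≤ c)
    (hB : ∀ x, β ≤ density {y | x ∈ B y}) (hP : ∀ x ∈ W, θ ≤ density {y | x ∈ P y})
    (hBP : ∀ x ∈ W, ∀ y, x ∈ P y → x ∉ B y) :
    ∃ y, β - c + c * θ - (β + c * θ) * density Wᶜ ≤
      𝔼 x, (P y)ᶜ.indicator (fun x => (B y).indicator 1 x - c) x := by
  classical
  have hlower : ∀ x, β - c + c * θ - (β + c * θ) * Wᶜ.indicator 1 x ≤
      𝔼 y, (P y)ᶜ.indicator (fun x => (B y).indicator 1 x - c) x := fun x => by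
    by_cases hx : x ∈ W
    · have hsplit : 𝔼 y, (P y)ᶜ.indicator (fun x => (B y).indicator 1 x - c) x =
          density {y | x ∈ B y} - c + c * density {y | x ∈ P y} := by
        rw [← Fintype.expect_const (ι := Y) c, density, density, mul_expect, ← expect_sub_distrib,
          ← expect_add_distrib]
        refine expect_congr rfl fun y _ => ?_
        rw [Fintype.expect_const]
        by_cases hxP : x ∈ P y
        · simp [hxP, hBP x hx y hxP, Set.indicator]
        · simp [hxP, Set.indicator]
      rw [hsplit, Set.indicator_of_notMem (Set.notMem_compl_iff.2 hx)]
      linarith [hB x, mul_le_mul_of_nonneg_left (hP x hx) hc]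
    · rw [Set.indicator_of_mem (Set.mem_compl hx)]
      refine le_expect univ_nonempty fun y _ => ?_
      rw [Pi.one_apply]
      refine Set.le_indicator_apply (fun _ => ?_) fun _ => by linarith
      linarith [(indicator_one_mem_Icc (B y) x).1]
  have hmean := expect_le_expect fun x (_ : x ∈ univ) => hlower x
  rw [expect_comm, expect_sub_distrib, Fintype.expect_const, ← mul_expect] at hmean
  obtain ⟨y, -, hy⟩ := exists_le_of_le_expect univ_nonempty hmean
  exact ⟨y, hy⟩

namespace DensityHalesJewett

variable [Fintype α] [Nonempty α]

lemma exists_expect_indicator_compl_iInter_le_of_lineFree (h : DensityHalesJewett α) (d : ℕ)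
    {σ : ℝ} (hσ : 0 < σ) :
    ∃ N, ∀ n ≥ N, ∀ (B : Set (Fin n → Option α)) {c : ℝ}, LineFree B → 0 ≤ c →
      (∀ A : Set (Fin d → Option α), LineFree A → density A ≤ c) →
      𝔼 x, (⋂ a, {x | some ∘ fillWildcards a x ∈ B})ᶜ.indicator
        (fun x => B.indicator 1 x - c) x ≤ σ := by
  obtain ⟨N, hN⟩ := h.exists_expect_indicator_compl_iInter_le d univ hσ
  refine ⟨N, fun n hn B c hB hc hd => ?_⟩
  set f : (Fin n → Option α) → ℝ := fun x => B.indicator 1 x - c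
  have hf : ∀ x, f x ≤ 1 := fun x => by linarith [(indicator_one_mem_Icc B x).2]
  have havg : SubspaceAveragesLE d f 0 := fun v => by
    rw [expect_sub_distrib, Fintype.expect_const]
    exact sub_nonpos.2 (hd _ (hB.preimage_subspace v))
  simpa only [mem_univ, Set.iInter_true] using
    hN n hn _ f (fun a => isInsensitive_setOf_fillWildcards_mem a B) hf havg

lemma exists_lineFree_le_expect_indicator_compl (h : DensityHalesJewett α) {ρ : ℝ} (hρ : 0 < ρ) :
    ∃ θ > 0, ∀ σ > 0, ∃ M₀, ∀ M ≥ M₀, ∃ n, ∀ l, ∀ A : Set (Fin (n + l) → Option α), LineFree A →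
      (∀ x : Fin n → Option α, ρ - min σ (ρ / 2) ≤ density (Fin.append x ⁻¹' A)) →
      ∃ B : Set (Fin M → Option α), LineFree B ∧
        ρ * θ - 3 * σ ≤ 𝔼 x, (⋂ a, {x | some ∘ fillWildcards a x ∈ B})ᶜ.indicator
          (fun x => B.indicator 1 x - (ρ + σ)) x := by
  obtain ⟨θ, hθ, hpopular⟩ := h.exists_subspace_forall_line_le_density (half_pos hρ)
  refine ⟨θ, hθ, fun σ hσ => ?_⟩
  obtain ⟨M₀, hM₀⟩ := exists_forall_density_forall_ne_none_le α
    (by positivity : 0 < σ / (ρ + (ρ + σ) * θ))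
  refine ⟨M₀, fun M hM => ?_⟩
  obtain ⟨n, hn⟩ := hpopular M
  refine ⟨n, fun l A hA hfiber => ?_⟩
  obtain ⟨v, hv⟩ := hn _ (fun x => Fin.append (some ∘ x) ⁻¹' A) fun x => by
    linarith [hfiber (some ∘ x), min_le_right σ (ρ / 2)]
  set B : (Fin l → Option α) → Set (Fin M → Option α) :=
    fun y => {x | Fin.append (subspaceMap some v x) y ∈ A}
  have hBfree : ∀ y, LineFree (B y) := fun y => by
    simpa only [Set.preimage, subspaceComp_apply, suffixSubspace_apply] using
      hA.preimage_subspace (subspaceComp (suffixSubspace y) (subspaceMap some v))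
  have hBdens : ∀ x, ρ - σ ≤ density {y | x ∈ B y} := fun x =>
    (sub_le_sub_left (min_le_left _ _) _).trans (hfiber (subspaceMap some v x))
  set W := {x : Fin M → Option α | ∃ i, x i = none}
  have hlines : ∀ x ∈ W, θ ≤ density {y | x ∈ ⋂ a, {x | some ∘ fillWildcards a x ∈ B y}} :=
    fun x hx => by
      simp only [B, Set.mem_iInter, Set.mem_ofPred_eq, subspaceMap_apply_comp]
      exact hv ⟨x, hx⟩
  obtain ⟨y, hy⟩ := exists_le_expect_indicator_compl (c := ρ + σ) (by positivity) hBdens hlines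
    fun x hx y hxy => (hBfree y).notMem_of_forall_fillWildcards_mem hx (Set.mem_iInter.1 hxy)
  refine ⟨B y, hBfree y, le_trans ?_ hy⟩
  have hWc : Wᶜ = {x | ∀ i, x i ≠ none} := by
    ext x
    simp [W]
  have hW : density Wᶜ * (ρ + (ρ + σ) * θ) ≤ σ := by
    rw [hWc]
    exact (le_div_iff₀ (by positivity)).1 (hM₀ M hM)
  linarith [mul_nonneg hσ.le (density_nonneg Wᶜ), mul_pos hσ hθ]

protected lemma option (h : DensityHalesJewett α) : DensityHalesJewett (Option α) := by
  by_contra hcon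
  simp only [DensityHalesJewett, not_forall, not_exists] at hcon
  obtain ⟨δ, hδ, hcon⟩ := hcon
  let F (n : ℕ) : Set (Set (Fin n → Option α)) := {A | LineFree A}
  have hF : FiberClosed F := fun m l A hA x => by
    change LineFree (Fin.append x ⁻¹' A)
    simpa only [Set.preimage, prefixSubspace_apply] using
      LineFree.preimage_subspace hA (prefixSubspace x)
  have hdense : ∀ n, ∃ A ∈ F n, δ ≤ density A := fun n => by
    obtain ⟨A, hAδ, hA⟩ := hcon n
    exact ⟨A, hA, hAδ⟩
  set ρ := limitDensity F
  have hρ : 0 < ρ := hδ.trans_le (le_limitDensity hdense)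
  obtain ⟨θ, hθ, hcorrelation⟩ := h.exists_lineFree_le_expect_indicator_compl hρ
  set σ := ρ * θ / 8 with hσ
  have hσ0 : 0 < σ := by positivity
  obtain ⟨d, hd⟩ := exists_forall_density_le_limitDensity_add hF hσ0
  obtain ⟨N, hN⟩ := h.exists_expect_indicator_compl_iInter_le_of_lineFree d hσ0
  obtain ⟨M₀, hM₀⟩ := hcorrelation σ hσ0
  obtain ⟨n, hn⟩ := hM₀ (max N M₀) (le_max_right _ _)
  obtain ⟨l, A, hA, hfiber⟩ := exists_forall_limitDensity_sub_le_density_fiber hF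
    (fun n => (hdense n).imp fun _ => And.left) n (by positivity : 0 < min σ (ρ / 2))
  obtain ⟨B, hB, hlower⟩ := hn l A hA hfiber
  have hupper := hN _ (le_max_left _ _) B hB (by positivity) (hd d le_rfl)
  linarith

end DensityHalesJewett

end Step

section DensityHalesJewettTheorem

variable {α β : Type*} [Fintype α] [Fintype β]

lemma DensityHalesJewett.of_subsingleton [Subsingleton α] : DensityHalesJewett α := by
  refine fun δ hδ => ⟨1, fun A hA => ⟨⟨fun _ => none, 0, rfl⟩, fun a => ?_⟩⟩
  obtain ⟨x, hx⟩ := nonempty_of_density_pos (hδ.trans_le hA)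
  exact Set.mem_of_eq_of_mem (Subsingleton.elim _ x) hx

lemma DensityHalesJewett.of_equiv (h : DensityHalesJewett α) (e : α ≃ β) :
    DensityHalesJewett β := by
  intro δ hδ
  obtain ⟨n, hn⟩ := h δ hδ
  refine ⟨n, fun A hA => ?_⟩
  obtain ⟨l, hl⟩ := hn (((Equiv.refl _).arrowCongr e) ⁻¹' A) (by rwa [density_preimage_equiv])
  refine ⟨l.map e, fun b => ?_⟩
  obtain ⟨a, rfl⟩ := e.surjective b
  rw [Line.map_apply]
  exact hl a

theorem densityHalesJewett (α : Type*) [Fintype α] : DensityHalesJewett α := by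
  refine Fintype.induction_empty_option (P := fun α _ => DensityHalesJewett α)
    (fun α β _ e h => ?_) .of_subsingleton (fun α _ h => ?_) α
  · exact @DensityHalesJewett.of_equiv α β (.ofEquiv β e.symm) _ h e
  · rcases isEmpty_or_nonempty α with _ | _
    · exact .of_subsingleton
    · exact h.option

end DensityHalesJewettTheorem

section AbelianSubgroups

open scoped commutatorElement

variable {G : Type*} [Group G]

lemma exists_mem_centralizer_notMem_forall_commutator_mem [Group.IsNilpotent G] {A : Subgroup G}
    [A.Normal] (hA : ¬ Subgroup.centralizer (A : Set G) ≤ A) :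
    ∃ x ∈ Subgroup.centralizer (A : Set G), x ∉ A ∧ ∀ g : G, ⁅x, g⁆ ∈ A := by
  classical
  set C := Subgroup.centralizer (A : Set G)
  have hex : ∃ n, ¬ Subgroup.upperCentralSeries G n ⊓ C ≤ A := by
    obtain ⟨n, hn⟩ := Group.IsNilpotent.nilpotent G
    exact ⟨n, by simpa [hn] using hA⟩
  obtain ⟨m, hm⟩ : ∃ m, Nat.find hex = m + 1 :=
    Nat.exists_eq_succ_of_ne_zero fun h0 => by simpa [h0] using Nat.find_spec hex
  have hle : Subgroup.upperCentralSeries G m ⊓ C ≤ A := not_not.mp (Nat.find_min hex (by omega))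
  obtain ⟨x, ⟨hxZ, hxC⟩, hxA⟩ := SetLike.not_le_iff_exists.mp (hm ▸ Nat.find_spec hex)
  refine ⟨x, hxC, hxA, fun g => hle ⟨Subgroup.mem_upperCentralSeries_succ_iff.mp hxZ g, ?_⟩⟩
  have hconj : x * (g * x⁻¹ * g⁻¹) ∈ C :=
    C.mul_mem hxC (Subgroup.Normal.conj_mem inferInstance _ (C.inv_mem hxC) g)
  rwa [mul_assoc g, ← mul_assoc, ← mul_assoc] at hconj

lemma exists_normal_isMulCommutative_centralizer_le (G : Type*) [Group G] [Finite G]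
    [Group.IsNilpotent G] :
    ∃ A : Subgroup G, A.Normal ∧ IsMulCommutative A ∧ Subgroup.centralizer (A : Set G) ≤ A := by
  obtain ⟨A, ⟨hnormal, hcomm⟩, hmax⟩ :=
    {A : Subgroup G | A.Normal ∧ IsMulCommutative A}.toFinite.exists_maximal
      ⟨⊥, inferInstance, inferInstance⟩
  refine ⟨A, hnormal, hcomm, ?_⟩
  by_contra hcent
  obtain ⟨x, hxC, hxA, hx⟩ := exists_mem_centralizer_notMem_forall_commutator_mem hcent
  rw [Subgroup.mem_centralizer_iff] at hxC
  set B := Subgroup.closure (insert x (A : Set G)) with hB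
  have hxB : x ∈ B := Subgroup.subset_closure (Set.mem_insert _ _)
  have hAB : A ≤ B := fun a ha => Subgroup.subset_closure (Set.mem_insert_of_mem _ ha)
  have hBcomm : IsMulCommutative B := by
    refine Subgroup.isMulCommutative_closure ?_
    rintro y (rfl | hy) z (rfl | hz)
    exacts [rfl, (hxC z hz).symm, hxC y hy, setLike_mul_comm hy hz]
  have hBnormal : B.Normal := by
    refine ⟨fun b hb g => ?_⟩
    suffices B ≤ B.comap (MulAut.conj g).toMonoidHom from this hb
    rw [hB, Subgroup.closure_le]
    rintro y (rfl | hy)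
    · simpa [commutatorElement_def, mul_assoc] using
        B.mul_mem (B.inv_mem (hAB (hx g))) hxB
    · exact hAB (hnormal.conj_mem y hy g)
  exact hxA (hmax ⟨hBnormal, hBcomm⟩ hAB hxB)

lemma card_le_mul_factorial_of_centralizer_le [Finite G] {A : Subgroup G} [A.Normal]
    (hA : Subgroup.centralizer (A : Set G) ≤ A) :
    Nat.card G ≤ Nat.card A * (Nat.card A).factorial := by
  let φ : G →* MulAut A := MulAut.conjNormal
  have hker : Nat.card φ.ker ≤ Nat.card A := by
    refine Subgroup.card_le_of_le (le_trans (fun g hg => ?_) hA)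
    rw [Subgroup.mem_centralizer_iff]
    intro a ha
    have hconj : g * a * g⁻¹ = a := by
      simpa [φ] using congrArg Subtype.val (DFunLike.congr_fun (MonoidHom.mem_ker.mp hg) ⟨a, ha⟩)
    exact (mul_inv_eq_iff_eq_mul.mp hconj).symm
  have hrange : Nat.card φ.range ≤ (Nat.card A).factorial := calc
    Nat.card φ.range ≤ Nat.card (MulAut A) := Subgroup.card_le_card_group _
    _ ≤ Nat.card (Equiv.Perm A) :=
      Nat.card_le_card_of_injective (fun e : MulAut A => e.toEquiv) MulEquiv.toEquiv_injective
    _ = (Nat.card A).factorial := Nat.card_perm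
  calc Nat.card G = Nat.card φ.ker * Nat.card φ.range := by
        rw [← Subgroup.index_ker, Subgroup.card_mul_index]
    _ ≤ Nat.card A * (Nat.card A).factorial := Nat.mul_le_mul hker hrange

lemma exists_isMulCommutative_card_le_mul_factorial (G : Type*) [Group G] [Finite G]
    [Group.IsNilpotent G] :
    ∃ A : Subgroup G, IsMulCommutative A ∧
      Nat.card G ≤ Nat.card A * (Nat.card A).factorial := by
  obtain ⟨A, hnormal, hcomm, hA⟩ := exists_normal_isMulCommutative_centralizer_le G
  exact ⟨A, hcomm, card_le_mul_factorial_of_centralizer_le hA⟩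

lemma card_le_of_forall_isMulCommutative_card_le [Finite G] {M : ℕ}
    (hM : ∀ A : Subgroup G, IsMulCommutative A → Nat.card A ≤ M) :
    Nat.card G ≤ (M * M.factorial) ^ M := by
  have hM0 : 0 < M := Nat.card_pos.trans_le (hM ⊥ inferInstance)
  have hprime : (Nat.card G).primeFactors ⊆ Icc 1 M := fun p hp => by
    have := Fact.mk (Nat.prime_of_mem_primeFactors hp)
    obtain ⟨x, hx⟩ := exists_prime_orderOf_dvd_card' p (Nat.dvd_of_mem_primeFactors hp)
    have hcard := hM (Subgroup.zpowers x) inferInstance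
    rw [Nat.card_zpowers, hx] at hcard
    exact mem_Icc.mpr ⟨(Nat.prime_of_mem_primeFactors hp).one_lt.le, hcard⟩
  have hsylow : ∀ p ∈ (Nat.card G).primeFactors,
      p ^ (Nat.card G).factorization p ≤ M * M.factorial := fun p hp => by
    have := Fact.mk (Nat.prime_of_mem_primeFactors hp)
    let P : Sylow p G := default
    have := P.isPGroup'.isNilpotent
    obtain ⟨A, hcomm, hA⟩ := exists_isMulCommutative_card_le_mul_factorial P
    have hAM : Nat.card A ≤ M := by
      rw [← Subgroup.card_map_of_injective (P : Subgroup G).subtype_injective]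
      exact hM _ inferInstance
    rw [← P.card_eq_multiplicity]
    exact hA.trans (Nat.mul_le_mul hAM (Nat.factorial_le hAM))
  calc Nat.card G = ∏ p ∈ (Nat.card G).primeFactors, p ^ (Nat.card G).factorization p :=
        (Nat.prod_factorization_pow_eq_self Nat.card_pos.ne').symm
    _ ≤ (M * M.factorial) ^ (Nat.card G).primeFactors.card := prod_le_pow_card _ _ _ hsylow
    _ ≤ (M * M.factorial) ^ M :=
        Nat.pow_le_pow_right (by positivity) (by simpa using card_le_card hprime)

end AbelianSubgroups

section SubsetProducts

variable {ι η α H : Type*}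

/-- A family in a commutative monoid is dissociated if its products over distinct subsets of the
index type are distinct. This is the version of `MulDissociated` for families. -/
def Dissociated [CommMonoid H] (d : ι → H) : Prop :=
  Function.Injective fun s : Finset ι => ∏ i ∈ s, d i

lemma Dissociated.ne_one [CommMonoid H] {d : ι → H} (hd : Dissociated d) (i : ι) : d i ≠ 1 :=
  fun hi => singleton_ne_empty i (hd (by simpa using hi))

lemma exists_forall_mul_ne [Group H] [Finite H] (A B : Finset H) (h : #A * #B < Nat.card H) :
    ∃ z, ∀ a ∈ A, ∀ b ∈ B, z * a ≠ b := by
  classical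
  have := Fintype.ofFinite H
  obtain ⟨z, -, hz⟩ : ∃ z ∈ univ, z ∉ image₂ (fun a b => b * a⁻¹) A B := by
    refine exists_mem_notMem_of_card_lt_card ((card_image₂_le _ A B).trans_lt ?_)
    rwa [card_univ, ← Nat.card_eq_fintype_card]
  exact ⟨z, fun a ha b hb hab => hz (mem_image₂.2 ⟨a, ha, b, hb, (eq_mul_inv_of_mul_eq hab).symm⟩)⟩

lemma Dissociated.finCons [CancelCommMonoid H] {n : ℕ} {d : Fin n → H} (hd : Dissociated d)
    {z : H} (hz : ∀ s t : Finset (Fin n), z * ∏ i ∈ s, d i ≠ ∏ i ∈ t, d i) :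
    Dissociated (Fin.cons z d : Fin (n + 1) → H) := by
  have hcons (s : Finset (Fin (n + 1))) : ∏ i ∈ s, (Fin.cons z d : Fin (n + 1) → H) i =
      (if 0 ∈ s then z else 1) * ∏ i with i.succ ∈ s, d i := by
    rw [prod_filter, ← Fintype.prod_ite_mem, Fin.prod_univ_succ]
    simp only [Fin.cons_zero, Fin.cons_succ]
  intro s t hst
  simp only [hcons] at hst
  have hzero : 0 ∈ s ↔ 0 ∈ t := by
    by_cases hs : 0 ∈ s <;> by_cases ht : 0 ∈ t <;>
      simp only [hs, ht, if_true, if_false, one_mul] at hst ⊢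
    exacts [(hz _ _ hst).elim, (hz _ _ hst.symm).elim]
  simp only [hzero, mul_right_inj] at hst
  have hsucc := hd hst
  ext i
  cases i using Fin.cases with
  | zero => exact hzero
  | succ i => simpa using Finset.ext_iff.1 hsucc i

lemma exists_dissociated [CommGroup H] [Finite H] (n : ℕ) (h : 4 ^ n < Nat.card H) :
    ∃ d : Fin n → H, Dissociated d := by
  classical
  induction n with
  | zero => exact ⟨Fin.elim0, Function.injective_of_subsingleton _⟩
  | succ n ih =>
    have hn : 4 ^ n < Nat.card H := (Nat.pow_le_pow_right (by norm_num) n.le_succ).trans_lt h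
    obtain ⟨d, hd⟩ := ih hn
    let A : Finset H := univ.image fun s : Finset (Fin n) => ∏ i ∈ s, d i
    have hA (s : Finset (Fin n)) : ∏ i ∈ s, d i ∈ A := mem_image_of_mem _ (mem_univ s)
    have hcard : #A ≤ 2 ^ n := card_image_le.trans (by simp)
    obtain ⟨z, hz⟩ := exists_forall_mul_ne A A <| calc
      #A * #A ≤ 2 ^ n * 2 ^ n := Nat.mul_le_mul hcard hcard
      _ = (2 * 2) ^ n := (mul_pow 2 2 n).symm
      _ < Nat.card H := hn
    exact ⟨Fin.cons z d, hd.finCons fun s t => hz _ (hA s) _ (hA t)⟩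

/-- The product of the family `d` over the wildcard block of the `j`-th direction of the
combinatorial subspace `v`. -/
def wildcardProd [CommMonoid H] [Fintype ι] [DecidableEq α] [DecidableEq η] (d : ι → H)
    (v : Subspace η α ι) (j : η) : H :=
  ∏ i with v.idxFun i = Sum.inr j, d i

variable [CommMonoid H] [Fintype ι] [DecidableEq α] [DecidableEq η]

lemma exists_forall_prod_pow_subspace_apply [Fintype η] (d : ι → H) (v : Subspace η α ι)
    (e : α → ℕ) :
    ∃ c, ∀ x, ∏ i, d i ^ e (v x i) = c * ∏ j, wildcardProd d v j ^ e (x j) := by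
  refine ⟨∏ i, (v.idxFun i).elim (fun a => d i ^ e a) 1, fun x => ?_⟩
  simp only [wildcardProd, prod_filter, ← prod_pow]
  rw [prod_comm, ← prod_mul_distrib]
  refine prod_congr rfl fun i _ => ?_
  rcases hi : v.idxFun i with a | j <;> simp [Subspace.coe_apply, hi, ite_pow]

lemma dissociated_wildcardProd {d : ι → H} (hd : Dissociated d) (v : Subspace η α ι) :
    Dissociated (wildcardProd d v) := by
  classical
  intro s t hst
  have hprod (s : Finset η) : ∏ j ∈ s, wildcardProd d v j =
      ∏ i with ∃ j ∈ s, v.idxFun i = Sum.inr j, d i := by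
    simp only [wildcardProd, prod_filter]
    rw [prod_comm]
    refine prod_congr rfl fun i _ => ?_
    rcases v.idxFun i with a | j <;> simp
  have hblocks := hd ((hprod s).symm.trans (hst.trans (hprod t)))
  ext j
  obtain ⟨i, hi⟩ := v.proper j
  simpa [hi] using Finset.ext_iff.1 hblocks i

end SubsetProducts

section Configurations

universe u v

lemma le_density_of_mul_card_sq_le {G : Type*} [Fintype G] [Nonempty G] {c : ℝ} {S : Finset (G × G)}
    (hS : c * (Fintype.card G : ℝ) ^ 2 ≤ #S) : c ≤ density (S : Set (G × G)) := by
  classical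
  have hG : (0 : ℝ) < Fintype.card G ^ 2 := by positivity
  rw [density, Fintype.expect_eq_sum_div_card, sum_indicator_eq_sum_filter, Fintype.card_prod,
    Nat.cast_mul, ← sq, le_div_iff₀ hG]
  simpa using hS

theorem exists_dissociated_forall_mem (r m : ℕ) {c : ℝ} (hc : 0 < c) :
    ∃ N, ∀ (G : Type u) (H : Type v) [Group G] [Fintype G] [CommGroup H] [Finite H] (f : H →* G),
      N < Nat.card H → ∀ S : Set (G × G), c ≤ density S →
        ∃ (x y : G) (d : Fin r → H), Dissociated d ∧ ∀ a b : Fin r → Fin (m + 1),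
          (x * f (∏ j, d j ^ (a j : ℕ)), f (∏ j, d j ^ (b j : ℕ)) * y) ∈ S := by
  obtain ⟨n, hn⟩ := (densityHalesJewett (Fin (m + 1) × Fin (m + 1))).exists_subspace r hc
  refine ⟨4 ^ n, fun G H _ _ _ _ f hH S hS => ?_⟩
  obtain ⟨d, hd⟩ := exists_dissociated n hH
  let left (w : Fin n → Fin (m + 1) × Fin (m + 1)) : H := ∏ i, d i ^ ((w i).1 : ℕ)
  let right (w : Fin n → Fin (m + 1) × Fin (m + 1)) : H := ∏ i, d i ^ ((w i).2 : ℕ)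
  have htranslate w : c ≤ density {p : G × G | (p.1 * f (left w), f (right w) * p.2) ∈ S} :=
    hS.trans_eq (density_preimage_equiv
      ((Equiv.mulRight (f (left w))).prodCongr (Equiv.mulLeft (f (right w)))) S).symm
  have hmean := le_expect univ_nonempty fun w _ => htranslate w
  rw [expect_density_comm] at hmean
  obtain ⟨⟨x, y⟩, -, hxy⟩ := exists_le_of_le_expect univ_nonempty hmean
  obtain ⟨v, hv⟩ := hn _ hxy
  obtain ⟨p, hp⟩ := exists_forall_prod_pow_subspace_apply d v fun a => (a.1 : ℕ)
  obtain ⟨q, hq⟩ := exists_forall_prod_pow_subspace_apply d v fun a => (a.2 : ℕ)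
  refine ⟨x * f p, f q * y, wildcardProd d v, dissociated_wildcardProd hd v, fun a b => ?_⟩
  have hmem := hv fun j => (a j, b j)
  simpa only [Set.mem_ofPred_eq, left, right, hp, hq, mul_comm q, map_mul, mul_assoc] using hmem

end Configurations

section Staircase

universe u

open scoped IsMulCommutative

lemma exists_mapsTo_insert_iterate {α : Type*} [DecidableEq α] (f : α → α) (E : Finset α) {n : ℕ}
    (hn : n < #E) :
    ∃ (R : Finset α) (r : α), r ∉ R ∧ #R = n ∧ (∀ x ∈ R, f x ∈ insert r R) ∧
      ∀ x ∈ insert r R, ∃ i ≤ n, ∃ e ∈ E, f^[i] e = x := by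
  induction n with
  | zero =>
    obtain ⟨e, he⟩ := card_pos.1 hn
    exact ⟨∅, e, notMem_empty e, card_empty, by simp, by simpa using he⟩
  | succ n ih =>
    obtain ⟨R, r, hr, hcard, hf, hE⟩ := ih (by omega)
    have hcard' : #(insert r R) = n + 1 := by rw [card_insert_of_notMem hr, hcard]
    obtain ⟨s, hs, hfr, i, hi, e, he, rfl⟩ : ∃ s ∉ insert r R, f r ∈ insert s (insert r R) ∧
        ∃ i ≤ n + 1, ∃ e ∈ E, f^[i] e = s := by
      by_cases hfr : f r ∈ insert r R
      · obtain ⟨e, he, heR⟩ := exists_mem_notMem_of_card_lt_card (hcard'.trans_lt hn)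
        exact ⟨e, heR, mem_insert_of_mem hfr, 0, by omega, e, he, rfl⟩
      · obtain ⟨i, hi, e, he, rfl⟩ := hE r (mem_insert_self r R)
        exact ⟨_, hfr, mem_insert_self _ _, i + 1, by omega, e, he,
          Function.iterate_succ_apply' f i e⟩
    refine ⟨insert r R, _, hs, hcard', fun x hx => ?_, fun x hx => ?_⟩
    · rcases mem_insert.1 hx with rfl | hx
      exacts [hfr, mem_insert_of_mem (hf x hx)]
    · rcases mem_insert.1 hx with rfl | hx
      · exact ⟨i, hi, e, he, rfl⟩
      · obtain ⟨i, hi, e, he, rfl⟩ := hE x hx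
        exact ⟨i, by omega, e, he, rfl⟩

lemma Dissociated.exists_mul_mem_insert {ι H : Type*} [Fintype ι] [CommMonoid H] [DecidableEq H]
    {d : ι → H} (hd : Dissociated d) (j₀ : ι) {n : ℕ} (hn : n < 2 ^ Fintype.card ι) :
    ∃ (R : Finset H) (r : H), r ∉ R ∧ #R = n ∧ (∀ w ∈ R, d j₀ * w ∈ insert r R) ∧
      ∀ w ∈ insert r R, ∃ a : ι → Fin (n + 2), ∏ j, d j ^ (a j : ℕ) = w := by
  classical
  let E : Finset H := univ.image fun s : Finset ι => ∏ j ∈ s, d j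
  have hE : #E = 2 ^ Fintype.card ι := by rw [card_image_of_injective _ hd]; simp
  obtain ⟨R, r, hr, hcard, hmul, horbit⟩ :=
    exists_mapsTo_insert_iterate (d j₀ * ·) E (hn.trans_eq hE.symm)
  refine ⟨R, r, hr, hcard, hmul, fun w hw => ?_⟩
  obtain ⟨i, hi, e, he, rfl⟩ := horbit w hw
  obtain ⟨s, -, rfl⟩ := mem_image.1 he
  refine ⟨fun j => ⟨(if j = j₀ then i else 0) + if j ∈ s then 1 else 0, by split_ifs <;> omega⟩, ?_⟩
  simp only [pow_add, prod_mul_distrib, pow_ite, pow_zero, pow_one, Fintype.prod_ite_eq',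
    Fintype.prod_ite_mem, mul_left_iterate]

theorem exists_staircase (n : ℕ) {c : ℝ} (hc : 0 < c) :
    ∃ N, ∀ (G : Type u) [Group G] [Fintype G] [DecidableEq G], N < Fintype.card G →
      ∀ S : Set (G × G), c ≤ density S →
        ∃ (y z r : G) (R : Finset G), y ≠ z ∧ r ∉ R ∧ #R = n ∧
          (∀ x ∈ insert r R, (x, y) ∈ S ∧ (x, z) ∈ S) ∧
          ∀ x ∈ R, ∃ x' ∈ insert r R, x * z = x' * y := by
  obtain ⟨M, hM⟩ := exists_dissociated_forall_mem.{u, u} (n + 1) (n + 1) hc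
  refine ⟨(M * M.factorial) ^ M, fun G _ _ _ hG S hS => ?_⟩
  obtain ⟨H, hcomm, hMH⟩ : ∃ H : Subgroup G, IsMulCommutative H ∧ M < Nat.card H := by
    by_contra! hle
    exact ((card_le_of_forall_isMulCommutative_card_le hle).trans_lt
      (by rwa [Nat.card_eq_fintype_card])).false
  obtain ⟨x, y, d, hd, hmem⟩ := hM G H H.subtype hMH S hS
  obtain ⟨R, r, hr, hcard, hmul, hprod⟩ :=
    hd.exists_mul_mem_insert 0 (n := n) (by simpa using n.lt_succ_self.trans Nat.lt_two_pow_self)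
  let row : H ↪ G := (Function.Embedding.subtype _).trans (mulLeftEmbedding x)
  have hrow {g : G} : g ∈ insert (row r) (R.map row) ↔ ∃ w ∈ insert r R, row w = g := by
    rw [← map_insert, mem_map]
  refine ⟨y, d 0 * y, row r, R.map row, ?_, by simpa using hr, by simpa using hcard, ?_, ?_⟩
  · simpa [eq_comm (a := y)] using hd.ne_one 0
  · intro g hg
    obtain ⟨w, hw, rfl⟩ := hrow.1 hg
    obtain ⟨a, rfl⟩ := hprod w hw
    refine ⟨by simpa [row] using hmem a 0, ?_⟩
    simpa [row, Pi.single_apply, apply_ite] using hmem a (Pi.single 0 1)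
  · intro g hg
    obtain ⟨w, hw, rfl⟩ := mem_map.1 hg
    refine ⟨row (d 0 * w), hrow.2 ⟨_, hmul w hw, rfl⟩, ?_⟩
    simp [row, mul_comm (d 0) w, mul_assoc]

lemma exists_card_eq_and_le_card_filter {G : Type*} [Mul G] [Fintype G] [DecidableEq G]
    (S : Finset (G × G)) {y z : G} (hyz : y ≠ z) {V W P : Finset G} (hWV : W ⊆ V)
    (hV : ∀ x ∈ V, (x, y) ∈ S ∧ x * y ∈ P) (hW : ∀ x ∈ W, (x, z) ∈ S ∧ x * z ∈ P) {k : ℕ}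
    (hk : #V + #P + 2 ≤ k) (hkG : k ≤ Fintype.card G) :
    ∃ T : Finset G, #T = k ∧ #V + #W ≤ #{p ∈ S | p.1 ∈ T ∧ p.2 ∈ T ∧ p.1 * p.2 ∈ T} := by
  have hcard : #(V ∪ P ∪ {y, z}) ≤ k := calc
    #(V ∪ P ∪ {y, z}) ≤ #(V ∪ P) + #{y, z} := card_union_le _ _
    _ ≤ #V + #P + 2 := Nat.add_le_add (card_union_le _ _) card_le_two
    _ ≤ k := hk
  obtain ⟨T, hT, hTk⟩ := exists_superset_card_eq hcard hkG
  simp only [union_subset_iff, insert_subset_iff, singleton_subset_iff] at hT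
  obtain ⟨⟨hVT, hPT⟩, hyT, hzT⟩ := hT
  refine ⟨T, hTk, ?_⟩
  have hdisj : Disjoint (V ×ˢ {y}) (W ×ˢ {z}) :=
    disjoint_product.2 (Or.inr (disjoint_singleton.2 hyz))
  calc #V + #W = #(V ×ˢ {y} ∪ W ×ˢ {z}) := by
        rw [card_union_of_disjoint hdisj, card_product, card_product, card_singleton,
          card_singleton, mul_one, mul_one]
    _ ≤ _ := card_le_card fun p hp => ?_
  obtain ⟨a, b⟩ := p
  simp only [mem_union, mem_product, mem_singleton] at hp
  rw [mem_filter]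
  rcases hp with ⟨ha, rfl⟩ | ⟨ha, rfl⟩
  · exact ⟨(hV a ha).1, hVT ha, hyT, hPT (hV a ha).2⟩
  · exact ⟨(hW a ha).1, hVT (hWV ha), hzT, hPT (hW a ha).2⟩

end Staircase

end BrownErdosSos

open BrownErdosSos Finset in
theorem stmt_17_general (k : ℕ) (hk : 3 ≤ k) (c : ℝ) (hc : 0 < c) :
    ∃ N : ℕ, ∀ (G : Type*) [Group G] [Fintype G] [DecidableEq G],
      N < Fintype.card G →
      ∀ S : Finset (G × G), c * (Fintype.card G : ℝ) ^ 2 ≤ S.card →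
        ∃ T : Finset G, T.card = k ∧
          k - 3 ≤ (S.filter fun p => p.1 ∈ T ∧ p.2 ∈ T ∧ p.1 * p.2 ∈ T).card := by
  obtain ⟨N, hN⟩ := exists_staircase ((k - 3) / 2) hc
  refine ⟨N + k, fun G _ _ _ hG S hS => ?_⟩
  obtain ⟨y, z, r, R, hyz, hr, hcard, hmem, hstep⟩ :=
    hN G (by omega) S (le_density_of_mul_card_sq_le hS)
  have hcard' : #(insert r R) = (k - 3) / 2 + 1 := by rw [card_insert_of_notMem hr, hcard]
  obtain ⟨V, hRV, hVR, hV⟩ := exists_subsuperset_card_eq (subset_insert r R)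
    (n := k - 3 - (k - 3) / 2) (by omega) (by omega)
  let P := (insert r R).image (· * y)
  have hP : #P ≤ (k - 3) / 2 + 1 := card_image_le.trans hcard'.le
  have hVP (x) (hx : x ∈ V) : (x, y) ∈ S ∧ x * y ∈ P :=
    ⟨(hmem x (hVR hx)).1, mem_image_of_mem _ (hVR hx)⟩
  have hRP (x) (hx : x ∈ R) : (x, z) ∈ S ∧ x * z ∈ P := by
    obtain ⟨x', hx', hxx'⟩ := hstep x hx
    exact ⟨(hmem x (mem_insert_of_mem hx)).2, mem_image.2 ⟨x', hx', hxx'.symm⟩⟩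
  obtain ⟨T, hT, hle⟩ :=
    exists_card_eq_and_le_card_filter S hyz hRV hVP hRP (k := k) (by omega) (by omega)
  exact ⟨T, hT, by omega⟩

/-- Brown–Erdős–Sós for finite groups, large `k`: for `k ≥ 6` and `c > 0`
there is `N` such that every finite group `G` with `|G| > N` and every `S ⊆ G × G` with
`|S| ≥ c·|G|²` admits `k` elements of `G` spanning at least `k − 3` triples `(a, b, ab)`
from `S`. -/
theorem stmt_17 (k : ℕ) (hk : 6 ≤ k) (c : ℝ) (hc : 0 < c) :
    ∃ N : ℕ, ∀ (G : Type) [Group G] [Fintype G] [DecidableEq G],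
      N < Fintype.card G →
      ∀ S : Finset (G × G), c * (Fintype.card G : ℝ) ^ 2 ≤ S.card →
        ∃ T : Finset G, T.card = k ∧
          k - 3 ≤ (S.filter fun p => p.1 ∈ T ∧ p.2 ∈ T ∧ p.1 * p.2 ∈ T).card :=
  stmt_17_general k (by omega) c hc
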